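/- For all natural numbers n ≥ 1 and real numbers p, q with 0 < p ≤ n and 0 < q ≤ n, one has ∫_0^1 x^(p−1) / (1−x^n)^((n−q)/n) dx = ∫_0^1 x^(q−1) / (1−x^n)^((n−p)/n) dx; that is, Euler's symbol satisfies the symmetry (p/q) = (q/p). -/

import Mathlib

/-- Symmetry of Euler's symbol: for `n ≥ 1` and `0 < p ≤ n`, `0 < q ≤ n`,
`∫_0^1 x^(p-1)/(1-x^n)^((n-q)/n) dx = ∫_0^1 x^(q-1)/(1-x^n)^((n-p)/n) dx`. -/
theorem euler_symbol_symm (n : ℕ) (hn : 1 ≤ n) (p q : ℝ) (hp : 0 < p) (hpn : p ≤ n)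
    (hq : 0 < q) (hqn : q ≤ n) :
    (∫ x in (0:ℝ)..1, x ^ (p - 1) / (1 - x ^ n) ^ (((n : ℝ) - q) / n)) =
      ∫ x in (0:ℝ)..1, x ^ (q - 1) / (1 - x ^ n) ^ (((n : ℝ) - p) / n) := by
  have hn0 : n ≠ 0 := by omega
  have hnR : (n : ℝ) ≠ 0 := by exact_mod_cast hn0
  have hnpos : (0 : ℝ) < n := by positivity
  rw [intervalIntegral.integral_of_le zero_le_one, intervalIntegral.integral_of_le zero_le_one,
    MeasureTheory.integral_Ioc_eq_integral_Ioo, MeasureTheory.integral_Ioc_eq_integral_Ioo]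
  let f : ℝ → ℝ := fun x => (1 - x ^ n) ^ ((n : ℝ)⁻¹)
  have hy : ∀ x ∈ Set.Ioo (0 : ℝ) 1, 0 < 1 - x ^ n ∧ 1 - x ^ n < 1 := by
    intro x hx
    have h1 : x ^ n < 1 := pow_lt_one₀ hx.1.le hx.2 hn0
    have h2 : 0 < x ^ n := pow_pos hx.1 n
    constructor <;> linarith
  have hfpow : ∀ x ∈ Set.Ioo (0 : ℝ) 1, (f x) ^ n = 1 - x ^ n := fun x hx =>
    Real.rpow_inv_natCast_pow (hy x hx).1.le hn0
  have hmaps : ∀ x ∈ Set.Ioo (0 : ℝ) 1, f x ∈ Set.Ioo (0 : ℝ) 1 := by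
    intro x hx
    exact ⟨Real.rpow_pos_of_pos (hy x hx).1 _,
      Real.rpow_lt_one (hy x hx).1.le (hy x hx).2 (by positivity)⟩
  have hinv : ∀ x ∈ Set.Ioo (0 : ℝ) 1, f (f x) = x := by
    intro x hx
    change (1 - (f x) ^ n) ^ ((n : ℝ)⁻¹) = x
    rw [hfpow x hx, sub_sub_cancel]
    exact Real.pow_rpow_inv_natCast hx.1.le hn0
  have himg : f '' Set.Ioo (0 : ℝ) 1 = Set.Ioo 0 1 := by
    apply Set.Subset.antisymm
    · rintro _ ⟨x, hx, rfl⟩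
      exact hmaps x hx
    · intro x hx
      exact ⟨f x, hmaps x hx, hinv x hx⟩
  have hinj : Set.InjOn f (Set.Ioo (0 : ℝ) 1) := by
    intro a ha b hb hab
    rw [← hinv a ha, hab, hinv b hb]
  have hder : ∀ x ∈ Set.Ioo (0 : ℝ) 1, HasDerivWithinAt f
      (-(x ^ (n - 1) * (1 - x ^ n) ^ ((n : ℝ)⁻¹ - 1))) (Set.Ioo 0 1) x := by
    intro x hx
    have h := (((hasDerivAt_pow n x).const_sub 1).rpow_const (p := (n : ℝ)⁻¹)
      (Or.inl (hy x hx).1.ne')).hasDerivWithinAt (s := Set.Ioo 0 1)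
    have e : -(x ^ (n - 1) * (1 - x ^ n) ^ ((n : ℝ)⁻¹ - 1)) =
        -((n : ℝ) * x ^ (n - 1)) * (n : ℝ)⁻¹ * (1 - x ^ n) ^ ((n : ℝ)⁻¹ - 1) := by
      rw [neg_mul, mul_right_comm, mul_inv_cancel₀ hnR]
      ring
    rw [e]
    exact h
  have key := MeasureTheory.integral_image_eq_integral_abs_deriv_smul measurableSet_Ioo hder hinj
    (fun x => x ^ (p - 1) / (1 - x ^ n) ^ (((n : ℝ) - q) / n))
  rw [himg] at key
  rw [key]
  refine MeasureTheory.setIntegral_congr_fun measurableSet_Ioo fun x hx => ?_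
  have hy0 := (hy x hx).1
  have hx0 := hx.1
  simp only [smul_eq_mul]
  rw [hfpow x hx, sub_sub_cancel, abs_neg, abs_of_nonneg (by positivity)]
  change _ * (((1 - x ^ n) ^ ((n : ℝ)⁻¹)) ^ (p - 1) / _) = _
  generalize 1 - x ^ n = y at hy0
  rw [← Real.rpow_natCast x (n - 1), ← Real.rpow_natCast x n, ← Real.rpow_mul hy0.le,
    ← Real.rpow_mul hx0.le, div_eq_mul_inv (_ ^ _) (_ ^ _), div_eq_mul_inv (x ^ (q - 1)) (_ ^ _), ← Real.rpow_neg hx0.le,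
    ← Real.rpow_neg hy0.le, Nat.cast_sub hn, Nat.cast_one]
  have e1 : q - 1 = ((n : ℝ) - 1) + -(n * ((n - q) / n)) := by field_simp; ring
  have e2 : -(((n : ℝ) - p) / n) = ((n : ℝ)⁻¹ - 1) + (n : ℝ)⁻¹ * (p - 1) := by field_simp; ring
  rw [e1, e2, Real.rpow_add hx0, Real.rpow_add hy0]
  ring
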